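/- For all integers n ≥ 1 and k ≥ 0 one has (in ℤ): T⁻(n,k) = k·R⁻(n−1,k) + (n−2k+2)·R⁻(n−1,k−1) + D⁺(n−1,k−1), where terms with second argument −1 vanish. -/

import Mathlib

/-!
Every signed simsun permutation of rank `n + 1` arises from exactly one of rank `n` by inserting
`n + 1` or `-(n + 1)` into its word (`insPerm_bijective`, `isSimsun_insPerm`). The left-hand side
is therefore a sum, over the simsun permutations `π` of rank `n`, of the number of insertions
that give an odd-signed simsun permutation with negative first entry and `k` descents
(`sum_insPerm`). The parity of `π` forces the sign of the inserted entry: negative if `π` is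
even-signed, positive otherwise.

Let `d` be the descent number of `π`, and call a gap of the word a descent, an ascent or the end.

* If `π(1) < 0` and the inserted entry is positive, the initial gap (a descent) is excluded. The
  other `d - 1` descents and the end keep the descent number. An ascent raises it and is
  admissible unless a descent follows; each of the `d - 1` later descents follows an ascent, which
  leaves `n - d - (d - 1) = n + 1 - 2d` insertions (`insSum_max`, `negSum_max_of_neg`).
* If `π(1) < 0` and the inserted entry is negative, the `d` descents keep the descent number. An
  ascent or the end raises it and is admissible unless a descent precedes; each descent is followed
  by such a gap, which leaves `n + 1 - d - d` insertions (`insSum_min`, `negSum_min_of_neg`).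
* If `π(1) > 0` or `n = 0`, only the insertion of `-(n + 1)` in the initial gap makes the first
  entry negative; it is always admissible and raises the descent number (`negSum_min_of_nonneg`).

In the first two cases the counts `d` and `n + 1 - 2d` agree, so the even-signed and the odd-signed
`π` combine to the two `R⁻` terms, and the third case gives the `D⁺` term.
-/

open Finset

/-- A signed permutation of rank `n`, encoded as an (unsigned) permutation of
`Fin n` together with a choice of sign for each position: the entry
`π(i+1)` of the word is `±(σ(i)+1)` where the sign is `-` iff `sgn i = true`. -/
abbrev SignedPerm (n : ℕ) := Equiv.Perm (Fin n) × (Fin n → Bool)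

/-- The entry `π(j+1)` of the word of a signed permutation. -/
def entry {n : ℕ} (π : SignedPerm n) (j : Fin n) : ℤ :=
  (if π.2 j then -1 else 1) * (((π.1 j : ℕ) : ℤ) + 1)

/-- The word `π(0)π(1)⋯π(n)` of a signed permutation (with the leading `0`). -/
def word {n : ℕ} (π : SignedPerm n) : List ℤ :=
  0 :: List.ofFn (entry π)

/-- `π(i)` for `0 ≤ i ≤ n` (and `0` outside this range). -/
def wordFn {n : ℕ} (π : SignedPerm n) (i : ℕ) : ℤ :=
  if h : 1 ≤ i ∧ i ≤ n then entry π ⟨i - 1, by omega⟩ else 0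

/-- A word has no double descent: no three consecutive strictly decreasing entries. -/
def noDD : List ℤ → Bool
  | a :: b :: c :: rest => (!(decide (b < a) && decide (c < b))) && noDD (b :: c :: rest)
  | _ => true

/-- A signed permutation is simsun if for every `0 ≤ k ≤ n`, deleting the entries
`±n, …, ±(n-k+1)` (i.e. keeping the entries of absolute value `≤ m := n - k`) from the
word `π(0)π(1)⋯π(n)` leaves a word with no three consecutive strictly decreasing
entries. -/
def IsSimsun {n : ℕ} (π : SignedPerm n) : Prop :=
  ∀ m ≤ n, noDD ((word π).filter (fun a => a.natAbs ≤ m)) = true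

instance {n : ℕ} : DecidablePred (IsSimsun (n := n)) := fun _ => by
  unfold IsSimsun; infer_instance

/-- The type-B descent number `des_B(π) = #{0 ≤ i ≤ n-1 : π(i) > π(i+1)}`. -/
def desB {n : ℕ} (π : SignedPerm n) : ℕ :=
  ((Finset.range n).filter (fun i => wordFn π (i + 1) < wordFn π i)).card

/-- The set of signed simsun permutations of rank `n`. -/
def RB (n : ℕ) : Finset (SignedPerm n) := univ.filter IsSimsun

/-- Signed simsun permutations with `π(1) > 0` (for `n = 0`, the empty permutation
is included, following the convention `R⁺_0 = 1`). -/
def RBp (n : ℕ) : Finset (SignedPerm n) :=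
  (RB n).filter (fun π => 0 < wordFn π 1 ∨ n = 0)

/-- Signed simsun permutations with `π(1) < 0`. -/
def RBm (n : ℕ) : Finset (SignedPerm n) :=
  (RB n).filter (fun π => wordFn π 1 < 0)

/-- A signed permutation is even-signed if its word has an even number of negative entries. -/
def IsEvenSigned {n : ℕ} (π : SignedPerm n) : Prop :=
  (univ.filter (fun j => π.2 j = true)).card % 2 = 0

instance {n : ℕ} : DecidablePred (IsEvenSigned (n := n)) := fun _ => by
  unfold IsEvenSigned; infer_instance

def RD (n : ℕ) : Finset (SignedPerm n) := (RB n).filter IsEvenSigned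
def RT (n : ℕ) : Finset (SignedPerm n) := (RB n).filter (fun π => ¬ IsEvenSigned π)
def RDp (n : ℕ) : Finset (SignedPerm n) := (RD n).filter (fun π => 0 < wordFn π 1 ∨ n = 0)
def RDm (n : ℕ) : Finset (SignedPerm n) := (RD n).filter (fun π => wordFn π 1 < 0)
def RTp (n : ℕ) : Finset (SignedPerm n) := (RT n).filter (fun π => 0 < wordFn π 1 ∨ n = 0)
def RTm (n : ℕ) : Finset (SignedPerm n) := (RT n).filter (fun π => wordFn π 1 < 0)

/-- `R(n,k)`, as an integer, vanishing for `k < 0`. -/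
def Rcnt (n : ℕ) (k : ℤ) : ℤ := ((RB n).filter (fun π => (desB π : ℤ) = k)).card
def Rpcnt (n : ℕ) (k : ℤ) : ℤ := ((RBp n).filter (fun π => (desB π : ℤ) = k)).card
def Rmcnt (n : ℕ) (k : ℤ) : ℤ := ((RBm n).filter (fun π => (desB π : ℤ) = k)).card
def Dcnt (n : ℕ) (k : ℤ) : ℤ := ((RD n).filter (fun π => (desB π : ℤ) = k)).card
def Tcnt (n : ℕ) (k : ℤ) : ℤ := ((RT n).filter (fun π => (desB π : ℤ) = k)).card
def Dpcnt (n : ℕ) (k : ℤ) : ℤ := ((RDp n).filter (fun π => (desB π : ℤ) = k)).card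
def Dmcnt (n : ℕ) (k : ℤ) : ℤ := ((RDm n).filter (fun π => (desB π : ℤ) = k)).card
def Tpcnt (n : ℕ) (k : ℤ) : ℤ := ((RTp n).filter (fun π => (desB π : ℤ) = k)).card
def Tmcnt (n : ℕ) (k : ℤ) : ℤ := ((RTm n).filter (fun π => (desB π : ℤ) = k)).card

/-! ### Insertion of an extreme entry into a list -/

/-- The number of descents of a list of integers. -/
def desL : List ℤ → ℕ
  | a :: b :: t => (if b < a then 1 else 0) + desL (b :: t)
  | _ => 0

/-- The indicator that a list starts with a descent. -/
def firstDesc : List ℤ → ℤ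
  | a :: b :: _ => if b < a then 1 else 0
  | _ => 0

/-- The weight `g (des u)` of a list without double descent; other lists have weight `0`. -/
def wt (g : ℕ → ℤ) (u : List ℤ) : ℤ := if noDD u = true then g (desL u) else 0

/-- The total weight of all lists obtained from `w` by inserting `x` somewhere after its
first entry. -/
def insSum (x : ℤ) (w : List ℤ) (g : ℕ → ℤ) : ℤ :=
  ∑ p ∈ range w.length, wt g (w.insertIdx (p + 1) x)

lemma noDD_cons_of_le {a b : ℤ} (h : a ≤ b) (t : List ℤ) :
    noDD (a :: b :: t) = noDD (b :: t) := by
  cases t with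
  | nil => simp [noDD]
  | cons c t => simp [noDD, not_lt.mpr h]

lemma noDD_tail {a : ℤ} {t : List ℤ} (h : noDD (a :: t) = true) : noDD t = true := by
  match t with
  | [] => rfl
  | [b] => rfl
  | b :: c :: t => simp only [noDD, Bool.and_eq_true] at h; exact h.2

/-- Prepending a first entry to a list changes its weight only through the descent it may
create, provided it creates no double descent. -/
lemma wt_cons {a b : ℤ} {t : List ℤ} (g : ℕ → ℤ)
    (h : noDD (a :: b :: t) = noDD (b :: t)) :
    wt g (a :: b :: t) = wt (fun j => g ((if b < a then 1 else 0) + j)) (b :: t) := by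
  unfold wt
  rw [h, desL]

/-- Inserting `x` behind `b` in a list `a :: b :: t` without double descent creates none at the
front, except possibly when a smaller `x` comes directly after `b`. -/
lemma noDD_insert_of_noDD {a b x : ℤ} {t : List ℤ} (h : noDD (a :: b :: t) = true) (p : ℕ)
    (hp : p = 0 → ¬ x < b) :
    noDD (a :: b :: t.insertIdx p x) = noDD (b :: t.insertIdx p x) := by
  cases p with
  | zero => simp [noDD, hp rfl]
  | succ p =>
    cases t with
    | nil => simp [noDD]
    | cons c t =>
      simp only [List.insertIdx_succ_cons]
      by_cases hb : b < a <;> by_cases hc : c < b <;> simp_all [noDD]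

/-- Inserting a new maximum `x`: descents and the final position keep the descent number, and
an ascent raises it, being admissible exactly when it is not followed by a descent. -/
lemma insSum_max (x : ℤ) (a : ℤ) (t : List ℤ) (hx : ∀ y ∈ a :: t, y < x)
    (h : noDD (a :: t) = true) (g : ℕ → ℤ) :
    insSum x (a :: t) g = ((desL (a :: t) : ℤ) + 1) * g (desL (a :: t)) +
      ((t.length : ℤ) - 2 * desL (a :: t) + firstDesc (a :: t)) * g (desL (a :: t) + 1) := by
  induction t generalizing a g with
  | nil =>
    have hax : ¬ x < a := not_lt.mpr (hx a (by simp)).le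
    simp [insSum, wt, desL, firstDesc, noDD, hax]
  | cons b t ih =>
    have hax : a < x := hx a (by simp)
    have hbx : b < x := hx b (by simp)
    have ih' := ih b (fun y hy => hx y (List.mem_cons_of_mem _ hy)) (noDD_tail h)
    have first : wt g (a :: x :: b :: t) =
        (1 - firstDesc (b :: t)) * g (1 + desL (b :: t)) := by
      have h' := noDD_tail h
      unfold wt
      rw [noDD_cons_of_le hax.le]
      cases t with
      | nil => simp [noDD, firstDesc, desL, hbx, not_lt.mpr hax.le]
      | cons c t =>
        by_cases hc : c < b <;>
          simp [noDD, firstDesc, desL, hbx, not_lt.mpr hax.le, hc, h']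
    have key : insSum x (a :: b :: t) g = (1 - firstDesc (b :: t)) * g (1 + desL (b :: t)) +
          insSum x (b :: t) (fun j => g ((if b < a then 1 else 0) + j)) := by
      unfold insSum
      rw [List.length_cons, Finset.sum_range_succ', add_comm]
      congr 1
      refine Finset.sum_congr rfl fun p _ => ?_
      simp only [List.insertIdx_succ_cons]
      exact wt_cons g (noDD_insert_of_noDD h p fun _ => not_lt.mpr hbx.le)
    rw [key, ih']
    have hd : desL (a :: b :: t) = (if b < a then 1 else 0) + desL (b :: t) := rfl
    have hf : firstDesc (a :: b :: t) = (if b < a then 1 else 0) := rfl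
    rw [hd, hf]
    by_cases hb : b < a
    · have hf0 : firstDesc (b :: t) = 0 := by
        cases t with
        | nil => rfl
        | cons c t => by_cases hc : c < b <;> simp_all [noDD, firstDesc]
      simp only [hb, if_true, hf0, List.length_cons]
      push_cast
      simp only [add_assoc]
      ring
    · simp only [hb, if_false, List.length_cons, zero_add]
      push_cast
      rw [add_comm 1 (desL (b :: t))]
      ring

/-- Inserting a new minimum `x`: descents keep the descent number, while an ascent or the final
position raises it, being admissible exactly when it is not preceded by a descent. -/
lemma insSum_min (x : ℤ) (a : ℤ) (t : List ℤ) (hx : ∀ y ∈ a :: t, x < y)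
    (h : noDD (a :: t) = true) (g : ℕ → ℤ) :
    insSum x (a :: t) g = (desL (a :: t) : ℤ) * g (desL (a :: t)) +
      ((t.length : ℤ) + 1 - 2 * desL (a :: t)) * g (desL (a :: t) + 1) := by
  induction t generalizing a g with
  | nil =>
    have hax : x < a := hx a (by simp)
    simp [insSum, wt, desL, noDD, hax]
  | cons b t ih =>
    have hax : x < a := hx a (by simp)
    have hbx : x < b := hx b (by simp)
    have h' := noDD_tail h
    have ih' := ih b (fun y hy => hx y (List.mem_cons_of_mem _ hy)) h'
    have hd : desL (a :: b :: t) = (if b < a then 1 else 0) + desL (b :: t) := rfl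
    have first : wt g (a :: x :: b :: t) = g (1 + desL (b :: t)) := by
      have e0 : noDD (a :: x :: b :: t) = true := by
        simp [noDD, not_lt.mpr hbx.le, noDD_cons_of_le hbx.le, h']
      simp [wt, e0, desL, hax, not_lt.mpr hbx.le]
    have key : insSum x (a :: b :: t) g = g (1 + desL (b :: t)) +
        ∑ p ∈ range (t.length + 1), wt g (a :: b :: t.insertIdx p x) := by
      unfold insSum
      rw [List.length_cons, Finset.sum_range_succ', add_comm]
      simp only [zero_add, List.insertIdx_succ_cons, List.insertIdx_zero, first,
        List.length_cons]
    rw [key, hd]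
    by_cases hb : b < a
    · have hf0 : wt (fun j => g (1 + j)) (b :: x :: t) = g (1 + (1 + desL (b :: t))) := by
        cases t with
        | nil => simp [wt, desL, noDD, hbx]
        | cons c t =>
          have hcx : x < c := hx c (by simp)
          have hc : ¬ c < b := by intro hc; simp [noDD, hb, hc] at h
          simp [wt, desL, hc, hbx, not_lt.mpr hcx.le, noDD, noDD_cons_of_le hcx.le, noDD_tail h']
      have split := ih' (fun j => g (1 + j))
      unfold insSum at split
      rw [List.length_cons, Finset.sum_range_succ'] at split
      simp only [zero_add, List.insertIdx_succ_cons, List.insertIdx_zero, hf0] at split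
      -- directly after the descent `a > b` the new minimum creates a double descent
      have bad : wt g (a :: b :: x :: t) = 0 := by simp [wt, noDD, hb, hbx]
      have e1 : ∀ p, wt g (a :: b :: t.insertIdx (p + 1) x) =
          wt (fun j => g (1 + j)) (b :: t.insertIdx (p + 1) x) := by
        intro p
        rw [wt_cons g (noDD_insert_of_noDD h (p + 1) (by simp))]
        simp only [hb, if_true]
      rw [Finset.sum_range_succ']
      simp only [List.insertIdx_zero, bad, e1]
      simp only [hb, if_true, List.length_cons]
      push_cast
      simp only [add_assoc] at split ⊢
      rw [add_comm (desL (b :: t)) 1] at *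
      linear_combination split
    · have rest : (∑ p ∈ range (t.length + 1), wt g (a :: b :: t.insertIdx p x)) =
          insSum x (b :: t) g := by
        unfold insSum
        refine Finset.sum_congr rfl fun p _ => ?_
        rw [wt_cons g (noDD_cons_of_le (not_lt.mp hb) _)]
        simp [hb]
      rw [rest, ih']
      simp only [hb, if_false, List.length_cons, zero_add]
      push_cast
      rw [add_comm 1 (desL (b :: t))]
      ring

/-- The total weight of the lists that arise from `0 :: l` by inserting `x` after the leading
`0` and whose entry after the leading `0` is negative. -/
def negSum (x : ℤ) (l : List ℤ) (g : ℕ → ℤ) : ℤ :=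
  ∑ p ∈ range (l.length + 1),
    if (l.insertIdx p x).headD 0 < 0 then wt g (0 :: l.insertIdx p x) else 0

lemma negSum_max_of_neg {x : ℤ} {l : List ℤ} (hx0 : 0 < x) (hx : ∀ y ∈ l, y < x)
    (h : noDD (0 :: l) = true) (hl : l.headD 0 < 0) (g : ℕ → ℤ) :
    negSum x l g = (desL (0 :: l) : ℤ) * g (desL (0 :: l)) +
      ((l.length : ℤ) + 1 - 2 * desL (0 :: l)) * g (desL (0 :: l) + 1) := by
  cases l with
  | nil => simp at hl
  | cons b t =>
    have hb : b < 0 := hl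
    have hbx : b < x := hb.trans hx0
    have e : negSum x (b :: t) g = insSum x (b :: t) (fun j => g (1 + j)) := by
      unfold negSum insSum
      rw [Finset.sum_range_succ']
      simp only [List.insertIdx_zero, List.headD_cons, not_lt.mpr hx0.le, if_false, add_zero]
      refine Finset.sum_congr rfl fun p _ => ?_
      simp only [List.insertIdx_succ_cons, List.headD_cons, hb, if_true]
      rw [wt_cons g (noDD_insert_of_noDD h p fun _ => not_lt.mpr hbx.le)]
      simp only [hb, if_true]
    have hf0 : firstDesc (b :: t) = 0 := by
      cases t with
      | nil => rfl
      | cons c t => by_cases hc : c < b <;> simp_all [noDD, firstDesc]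
    rw [e, insSum_max x b t hx (noDD_tail h), hf0]
    simp only [desL, hb, if_true, List.length_cons]
    push_cast
    simp only [add_assoc]
    ring

lemma negSum_min_of_neg {x : ℤ} {l : List ℤ} (hx0 : x < 0) (hx : ∀ y ∈ l, x < y)
    (h : noDD (0 :: l) = true) (hl : l.headD 0 < 0) (g : ℕ → ℤ) :
    negSum x l g = (desL (0 :: l) : ℤ) * g (desL (0 :: l)) +
      ((l.length : ℤ) + 1 - 2 * desL (0 :: l)) * g (desL (0 :: l) + 1) := by
  have e : negSum x l g = insSum x (0 :: l) g := by
    unfold negSum insSum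
    refine Finset.sum_congr rfl fun p _ => ?_
    rw [if_pos, List.insertIdx_succ_cons]
    cases l with
    | nil => simp at hl
    | cons b t => cases p <;> simp_all
  rw [e, insSum_min x 0 l _ h]
  intro y hy
  rcases List.mem_cons.mp hy with rfl | hy
  · exact hx0
  · exact hx y hy

lemma negSum_max_of_nonneg {x : ℤ} {l : List ℤ} (hx0 : 0 < x) (hl : ¬ l.headD 0 < 0)
    (g : ℕ → ℤ) : negSum x l g = 0 := by
  refine Finset.sum_eq_zero fun p _ => if_neg ?_
  cases l with
  | nil => cases p <;> simp [hx0.le]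
  | cons b t => cases p <;> simp_all [hx0.le]

lemma negSum_min_of_nonneg {x : ℤ} {l : List ℤ} (hx0 : x < 0) (hx : ∀ y ∈ l, x < y)
    (h : noDD (0 :: l) = true) (hl : ¬ l.headD 0 < 0) (g : ℕ → ℤ) :
    negSum x l g = g (desL (0 :: l) + 1) := by
  unfold negSum
  rw [Finset.sum_range_succ', Finset.sum_eq_zero, zero_add]
  · cases l with
    | nil => simp [hx0, wt, noDD, desL]
    | cons b t =>
      have hb : ¬ b < 0 := hl
      have hbx : x < b := hx b (by simp)
      have e0 : noDD (0 :: x :: b :: t) = true := by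
        simp [noDD, not_lt.mpr hbx.le, noDD_cons_of_le hbx.le, noDD_tail h]
      simp [hx0, wt, e0, desL, hb, not_lt.mpr hbx.le, add_comm]
  · intro p _
    refine if_neg ?_
    cases l with
    | nil => simp
    | cons b t => simpa using hl

/-! ### Signed permutations as insertions -/

/-- The signed permutation of rank `n + 1` whose word arises from that of `π` by inserting
`n + 1` (negated if `b` is true) just before position `p` of `π(1)⋯π(n)`, counted from `0`. -/
def insPerm {n : ℕ} (x : SignedPerm n × Fin (n + 1) × Bool) : SignedPerm (n + 1) :=
  (((finSuccEquiv' x.2.1).trans (Equiv.optionCongr x.1.1)).trans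
    (finSuccEquiv' (Fin.last n)).symm, Fin.insertNth x.2.1 x.2.2 x.1.2)

/-- The inserted entry `±(n + 1)`. -/
def newEntry (n : ℕ) (b : Bool) : ℤ := (if b then -1 else 1) * ((n : ℤ) + 1)

section
variable {n : ℕ} (π : SignedPerm n) (p : Fin (n + 1)) (b : Bool)

lemma insPerm_fst_self : (insPerm (π, p, b)).1 p = Fin.last n := by
  simp [insPerm]

lemma insPerm_fst_succAbove (i : Fin n) :
    (insPerm (π, p, b)).1 (p.succAbove i) = (π.1 i).castSucc := by
  simp [insPerm]

lemma insPerm_snd_self : (insPerm (π, p, b)).2 p = b := by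
  simp [insPerm]

lemma insPerm_snd_succAbove (i : Fin n) :
    (insPerm (π, p, b)).2 (p.succAbove i) = π.2 i := by
  simp [insPerm]

lemma entry_insPerm :
    entry (insPerm (π, p, b)) = Fin.insertNth p (newEntry n b) (entry π) := by
  funext j
  refine Fin.succAboveCases p ?_ (fun i => ?_) j
  · rw [Fin.insertNth_apply_same, entry, insPerm_fst_self, insPerm_snd_self]
    simp [newEntry]
  · rw [Fin.insertNth_apply_succAbove, entry, insPerm_fst_succAbove, insPerm_snd_succAbove]
    simp [entry]

lemma isEvenSigned_insPerm :
    IsEvenSigned (insPerm (π, p, b)) ↔ (IsEvenSigned π ↔ b = false) := by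
  unfold IsEvenSigned
  rw [Finset.card_filter, Finset.card_filter, Fin.sum_univ_succAbove _ p]
  simp only [insPerm_snd_self, insPerm_snd_succAbove]
  cases b
  · simp
  · simp
    omega

end

lemma insPerm_bijective (n : ℕ) : Function.Bijective (insPerm (n := n)) := by
  rw [Fintype.bijective_iff_injective_and_card]
  constructor
  · rintro ⟨π, p, b⟩ ⟨ρ, q, c⟩ h
    have hpq : p = q := by
      apply (insPerm (π, p, b)).1.injective
      rw [insPerm_fst_self, h, insPerm_fst_self]
    subst hpq
    have hbc : b = c := by
      rw [← insPerm_snd_self π p b, h, insPerm_snd_self]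
    have h1 : π.1 = ρ.1 := by
      ext i
      have := insPerm_fst_succAbove π p b i
      rw [h, insPerm_fst_succAbove] at this
      exact congrArg Fin.val (Fin.castSucc_injective _ this).symm
    have h2 : π.2 = ρ.2 := by
      funext i
      rw [← insPerm_snd_succAbove π p b, h, insPerm_snd_succAbove]
    rw [hbc, Prod.ext h1 h2]
  · simp [Fintype.card_perm, Nat.factorial_succ, pow_succ]
    ring

lemma ofFn_insertNth {n : ℕ} (p : Fin (n + 1)) (x : ℤ) (f : Fin n → ℤ) :
    List.ofFn (Fin.insertNth (α := fun _ => ℤ) p x f) = (List.ofFn f).insertIdx p x := by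
  induction n with
  | zero =>
    obtain rfl : p = 0 := Fin.fin_one_eq_zero p
    simp
  | succ n ih =>
    refine Fin.cases ?_ (fun q => ?_) p
    · simp [List.ofFn_succ]
    · rw [List.ofFn_succ, List.ofFn_succ (f := f), Fin.val_succ, List.insertIdx_succ_cons, ← ih]
      congr 1
      congr 1
      funext j
      refine Fin.succAboveCases q ?_ (fun i => ?_) j
      · simp
      · rw [← Fin.succ_succAbove_succ, Fin.insertNth_apply_succAbove,
          Fin.insertNth_apply_succAbove]

lemma word_insPerm {n : ℕ} (π : SignedPerm n) (p : Fin (n + 1)) (b : Bool) :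
    word (insPerm (π, p, b)) =
      0 :: (List.ofFn (entry π)).insertIdx p (newEntry n b) := by
  rw [word, entry_insPerm, ofFn_insertNth]

lemma natAbs_entry_le {n : ℕ} (π : SignedPerm n) {y : ℤ} (hy : y ∈ List.ofFn (entry π)) :
    y.natAbs ≤ n := by
  obtain ⟨j, rfl⟩ := (List.mem_ofFn' _ _).mp hy
  have := (π.1 j).isLt
  unfold entry
  split_ifs <;> omega

lemma filter_insertIdx (P : ℤ → Bool) (x : ℤ) (hx : P x = false) (l : List ℤ) (p : ℕ) :
    (l.insertIdx p x).filter P = l.filter P := by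
  induction l generalizing p with
  | nil => cases p <;> simp [hx]
  | cons a t ih => cases p <;> simp [hx, List.filter_cons, ih]

/-- Deleting `±(n + 1)` from the enlarged word gives back the original word, so only the full
word imposes a new condition. -/
lemma isSimsun_insPerm {n : ℕ} (π : SignedPerm n) (p : Fin (n + 1)) (b : Bool) :
    IsSimsun (insPerm (π, p, b)) ↔
      IsSimsun π ∧ noDD (0 :: (List.ofFn (entry π)).insertIdx p (newEntry n b)) = true := by
  have hsmall : ∀ m ≤ n, (word (insPerm (π, p, b))).filter (fun a => a.natAbs ≤ m) =
      (word π).filter (fun a => a.natAbs ≤ m) := by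
    intro m hm
    rw [word_insPerm, word, List.filter_cons, List.filter_cons, filter_insertIdx]
    have : m < (newEntry n b).natAbs := by
      unfold newEntry; split_ifs <;> omega
    simpa using this
  have hfull : (word (insPerm (π, p, b))).filter (fun a => a.natAbs ≤ n + 1) =
      0 :: (List.ofFn (entry π)).insertIdx p (newEntry n b) := by
    rw [← word_insPerm, List.filter_eq_self]
    intro a ha
    rcases List.mem_cons.mp ha with rfl | ha
    · simp
    · simpa using natAbs_entry_le _ ha
  constructor
  · intro h
    refine ⟨fun m hm => ?_, ?_⟩
    · rw [← hsmall m hm]; exact h m (by omega)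
    · rw [← hfull]; exact h (n + 1) le_rfl
  · rintro ⟨h1, h2⟩ m hm
    rcases Nat.lt_or_ge n m with hlt | hle
    · obtain rfl : m = n + 1 := by omega
      rw [hfull]; exact h2
    · rw [hsmall m hle]; exact h1 m hle

lemma IsSimsun.noDD_word {n : ℕ} {π : SignedPerm n} (h : IsSimsun π) :
    noDD (0 :: List.ofFn (entry π)) = true := by
  have := h n le_rfl
  rwa [List.filter_eq_self.mpr] at this
  intro a ha
  rcases List.mem_cons.mp ha with rfl | ha
  · simp
  · simpa using natAbs_entry_le _ ha

lemma wordFn_eq_getD {n : ℕ} (π : SignedPerm n) (i : ℕ) :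
    wordFn π i = (word π).getD i 0 := by
  unfold wordFn word
  cases i with
  | zero => simp
  | succ i =>
    by_cases h : i < n
    · simp [h]
    · simp [h, List.getD]

lemma wordFn_one {n : ℕ} (π : SignedPerm n) :
    wordFn π 1 = (List.ofFn (entry π)).headD 0 := by
  rw [wordFn_eq_getD, word]
  cases List.ofFn (entry π) <;> simp

lemma desL_eq_card (a : ℤ) (l : List ℤ) :
    ((range l.length).filter
      (fun i => (a :: l).getD (i + 1) 0 < (a :: l).getD i 0)).card = desL (a :: l) := by
  induction l generalizing a with
  | nil => simp [desL]
  | cons b t ih =>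
    rw [desL, ← ih, Finset.card_filter, Finset.card_filter, List.length_cons,
      Finset.sum_range_succ', add_comm]
    simp

lemma desB_eq {n : ℕ} (π : SignedPerm n) : desB π = desL (0 :: List.ofFn (entry π)) := by
  rw [← desL_eq_card]
  unfold desB
  simp only [wordFn_eq_getD, word, List.length_ofFn]

/-! ### The recurrence -/

lemma entry_ne_zero {n : ℕ} (π : SignedPerm n) (j : Fin n) : entry π j ≠ 0 := by
  unfold entry
  split_ifs <;> omega

lemma wordFn_one_not_neg_iff {n : ℕ} (π : SignedPerm n) :
    (0 < wordFn π 1 ∨ n = 0) ↔ ¬ wordFn π 1 < 0 := by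
  cases n with
  | zero => simp [wordFn]
  | succ n =>
    have : wordFn π 1 ≠ 0 := by
      simpa [wordFn] using entry_ne_zero π 0
    omega

/-- The contribution of a fixed sign `b` of the inserted entry. -/
lemma sum_insPerm_fixed_sign {n : ℕ} (π : SignedPerm n) (hπ : IsSimsun π) (b : Bool) (k : ℤ) :
    (∑ p : Fin (n + 1), if IsSimsun (insPerm (π, p, b)) ∧ wordFn (insPerm (π, p, b)) 1 < 0 ∧
        (desB (insPerm (π, p, b)) : ℤ) = k then (1 : ℤ) else 0) =
      negSum (newEntry n b) (List.ofFn (entry π)) (fun j => if (j : ℤ) = k then 1 else 0) := by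
  unfold negSum
  rw [List.length_ofFn, Finset.sum_range]
  refine Finset.sum_congr rfl fun p _ => ?_
  have e : (IsSimsun (insPerm (π, p, b)) ∧ wordFn (insPerm (π, p, b)) 1 < 0 ∧
      (desB (insPerm (π, p, b)) : ℤ) = k) ↔
      (((List.ofFn (entry π)).insertIdx p (newEntry n b)).headD 0 < 0 ∧
        noDD (0 :: (List.ofFn (entry π)).insertIdx p (newEntry n b)) = true ∧
        (desL (0 :: (List.ofFn (entry π)).insertIdx p (newEntry n b)) : ℤ) = k) := by
    rw [isSimsun_insPerm, wordFn_one, desB_eq, entry_insPerm, ofFn_insertNth]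
    tauto
  rw [if_congr e rfl rfl, wt, ite_and, ite_and]

/-- The number of odd-signed simsun permutations with negative first entry and `k` descents
obtained from `π` by an insertion. The parity of `π` forces the sign of the inserted entry, but
if `π(1) < 0` the count does not depend on that parity. -/
lemma sum_insPerm {n : ℕ} (π : SignedPerm n) (k : ℤ) :
    (∑ y : Fin (n + 1) × Bool, if IsSimsun (insPerm (π, y)) ∧ ¬ IsEvenSigned (insPerm (π, y)) ∧
        wordFn (insPerm (π, y)) 1 < 0 ∧ (desB (insPerm (π, y)) : ℤ) = k then (1 : ℤ) else 0) =
      k * (if IsSimsun π ∧ wordFn π 1 < 0 ∧ (desB π : ℤ) = k then 1 else 0) +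
      ((n : ℤ) + 1 - 2 * k + 2) *
        (if IsSimsun π ∧ wordFn π 1 < 0 ∧ (desB π : ℤ) = k - 1 then 1 else 0) +
      (if IsSimsun π ∧ IsEvenSigned π ∧ ¬ wordFn π 1 < 0 ∧ (desB π : ℤ) = k - 1
        then 1 else 0) := by
  by_cases hπ : IsSimsun π
  swap
  · rw [Finset.sum_eq_zero]
    · simp [hπ]
    · rintro ⟨p, b⟩ _
      exact if_neg fun h => hπ ((isSimsun_insPerm π p b).mp h.1).1
  have hsign : (∑ y : Fin (n + 1) × Bool, if IsSimsun (insPerm (π, y)) ∧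
        ¬ IsEvenSigned (insPerm (π, y)) ∧
        wordFn (insPerm (π, y)) 1 < 0 ∧ (desB (insPerm (π, y)) : ℤ) = k then (1 : ℤ) else 0) =
      negSum (newEntry n (decide (IsEvenSigned π))) (List.ofFn (entry π))
        (fun j => if (j : ℤ) = k then 1 else 0) := by
    rw [← sum_insPerm_fixed_sign π hπ, Fintype.sum_prod_type]
    refine Finset.sum_congr rfl fun p _ => ?_
    rw [Fintype.sum_bool]
    simp only [isEvenSigned_insPerm]
    by_cases he : IsEvenSigned π <;> simp [he]
  rw [hsign, wordFn_one, desB_eq]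
  have hN := hπ.noDD_word
  have hb := fun y hy => natAbs_entry_le π (y := y) hy
  have hlen : (List.ofFn (entry π)).length = n := List.length_ofFn
  generalize List.ofFn (entry π) = l at *
  have arith : (desL (0 :: l) : ℤ) * (if (desL (0 :: l) : ℤ) = k then 1 else 0) +
      ((n : ℤ) + 1 - 2 * desL (0 :: l)) * (if ((desL (0 :: l) + 1 : ℕ) : ℤ) = k then 1 else 0) =
      k * (if (desL (0 :: l) : ℤ) = k then 1 else 0) +
      ((n : ℤ) + 1 - 2 * k + 2) * (if (desL (0 :: l) : ℤ) = k - 1 then 1 else 0) := by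
    rw [if_congr (show ((desL (0 :: l) + 1 : ℕ) : ℤ) = k ↔ (desL (0 :: l) : ℤ) = k - 1 by omega)
      rfl rfl]
    congr 1
    · split_ifs with h1
      · rw [h1]
      · simp
    · split_ifs with h2
      · rw [h2]
        ring
      · simp
  by_cases he : IsEvenSigned π
  · have h0 : newEntry n (decide (IsEvenSigned π)) < 0 := by simp [newEntry, he]; omega
    have hx : ∀ y ∈ l, newEntry n (decide (IsEvenSigned π)) < y := by
      intro y hy
      have := hb y hy
      simp [newEntry, he]; omega
    by_cases hl : l.headD 0 < 0
    · rw [negSum_min_of_neg h0 hx hN hl, hlen]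
      simpa only [hπ, hl, true_and, not_true, false_and, and_false, if_false, add_zero] using arith
    · rw [negSum_min_of_nonneg h0 hx hN hl]
      simp only [hπ, hl, he, true_and, not_false_eq_true, false_and, if_false]
      push_cast
      split_ifs <;> omega
  · have h0 : 0 < newEntry n (decide (IsEvenSigned π)) := by
      simp only [newEntry, he, decide_false, Bool.false_eq_true, if_false]
      omega
    have hx : ∀ y ∈ l, y < newEntry n (decide (IsEvenSigned π)) := by
      intro y hy
      have := hb y hy
      simp [newEntry, he]; omega
    by_cases hl : l.headD 0 < 0
    · rw [negSum_max_of_neg h0 hx hN hl, hlen]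
      simpa only [hπ, hl, true_and, not_true, false_and, and_false, if_false, add_zero] using arith
    · rw [negSum_max_of_nonneg h0 hl]
      simp only [hl, he, false_and, and_false, if_false, mul_zero, add_zero]

/-- For all integers `n ≥ 1`, `k ≥ 0`:
`T⁻(n,k) = k·R⁻(n−1,k) + (n−2k+2)·R⁻(n−1,k−1) + D⁺(n−1,k−1)`. -/
theorem stmt10 (n : ℕ) (hn : 1 ≤ n) (k : ℤ) (hk : 0 ≤ k) :
    Tmcnt n k =
      k * Rmcnt (n - 1) k + ((n : ℤ) - 2 * k + 2) * Rmcnt (n - 1) (k - 1) +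
        Dpcnt (n - 1) (k - 1) := by
  obtain ⟨m, rfl⟩ : ∃ m, n = m + 1 := ⟨n - 1, by omega⟩
  rw [Nat.add_sub_cancel]
  have hT : Tmcnt (m + 1) k = ∑ τ : SignedPerm (m + 1),
      if IsSimsun τ ∧ ¬ IsEvenSigned τ ∧ wordFn τ 1 < 0 ∧ (desB τ : ℤ) = k
        then (1 : ℤ) else 0 := by
    rw [Tmcnt, RTm, RT, RB, Finset.filter_filter, Finset.filter_filter, Finset.filter_filter,
      Finset.card_filter]
    push_cast
    exact Finset.sum_congr rfl fun _ _ => if_congr (by tauto) rfl rfl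
  have hR : ∀ j : ℤ, Rmcnt m j = ∑ π : SignedPerm m,
      if IsSimsun π ∧ wordFn π 1 < 0 ∧ (desB π : ℤ) = j then (1 : ℤ) else 0 := by
    intro j
    rw [Rmcnt, RBm, RB, Finset.filter_filter, Finset.filter_filter, Finset.card_filter]
    push_cast
    exact Finset.sum_congr rfl fun _ _ => if_congr (by tauto) rfl rfl
  have hD : Dpcnt m (k - 1) = ∑ π : SignedPerm m,
      if IsSimsun π ∧ IsEvenSigned π ∧ ¬ wordFn π 1 < 0 ∧ (desB π : ℤ) = k - 1
        then (1 : ℤ) else 0 := by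
    rw [Dpcnt, RDp, RD, RB, Finset.filter_filter, Finset.filter_filter, Finset.filter_filter,
      Finset.card_filter]
    push_cast
    exact Finset.sum_congr rfl fun π _ =>
      if_congr (by have := wordFn_one_not_neg_iff π; tauto) rfl rfl
  rw [hT, hR, hR, hD, ← (insPerm_bijective m).sum_comp, Fintype.sum_prod_type,
    Finset.mul_sum, Finset.mul_sum, ← Finset.sum_add_distrib, ← Finset.sum_add_distrib]
  refine Finset.sum_congr rfl fun π _ => ?_
  rw [sum_insPerm]
  push_cast
  rfl
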